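/- arXiv:1804.08810 — 2 statements merged into one kernel-verified Lean document; each statement's English description precedes it below -/
import Mathlib

section
/- There is a constant c > 0 such that for all sufficiently large even N the following holds. Let X be a set of N variables partitioned into pairwise disjoint blocks B_1,…,B_t with ⋃_i B_i = X and √N − log N ≤ |B_i| ≤ √N + log N for every i, and let k be an integer with 1 ≤ k ≤ N^{1/5}. Then, for φ drawn from D, the probability that at least one block B_i is k-unbalanced with respect to φ is at least 1 − 2^{−c·√N·log N}. -/
open MvPolynomial

noncomputable section

/-- A multilinear polynomial: every exponent is at most 1. -/
def MLin {σ : Type*} {K : Type*} [CommSemiring K] (f : MvPolynomial σ K) : Prop :=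
  ∀ d ∈ f.support, ∀ i, d i ≤ 1

/-- The partial derivative matrix of a multilinear polynomial over Y ∪ Z
(Y = `inl`-variables, Z = `inr`-variables), rows and columns indexed by subsets. -/
def pdm {h : ℕ} {K : Type*} [CommSemiring K] (f : MvPolynomial (Fin h ⊕ Fin h) K) :
    Matrix (Finset (Fin h)) (Finset (Fin h)) K := fun S T =>
  f.coeff ((∑ i ∈ S, Finsupp.single (Sum.inl i) 1) + ∑ j ∈ T, Finsupp.single (Sum.inr j) 1)

/-- The field G = F(W), the field of rational functions over F in variables
`w_{i,k,j}`, `i,k,j ∈ ℕ`. -/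
abbrev Gf (F : Type*) [Field F] : Type _ := FractionRing (MvPolynomial (ℕ × ℕ × ℕ) F)

/-- The element w_{i,k,j} of G. -/
def wv (F : Type*) [Field F] (i k j : ℕ) : Gf F :=
  algebraMap (MvPolynomial (ℕ × ℕ × ℕ) F) (Gf F) (MvPolynomial.X (i, k, j))

/-- The Raz–Yehudayoff polynomials `g_{i,j}` (first argument is fuel; every
recursive call reduces `j - i` by at least 2, so fuel `N` suffices for `g_{1,N}`). -/
def RY (F : Type*) [Field F] : ℕ → ℕ → ℕ → MvPolynomial ℕ (Gf F)
  | 0, _, _ => 1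
  | fuel + 1, i, j =>
      if j < i then 1
      else (1 + X i * X j) * RY F fuel (i + 1) (j - 1)
        + ∑ k ∈ (Finset.Icc (i + 1) (j - 2)).filter (fun k => (k - i) % 2 = 1),
            C (wv F i k j) * RY F fuel i k * RY F fuel (k + 1) j

/-- The Raz–Yehudayoff polynomial `g = g_{1,N}`, in the variables `x_1, …, x_N`. -/
def razPoly (F : Type*) [Field F] (N : ℕ) : MvPolynomial ℕ (Gf F) := RY F N 1 N

/-- `|φ(S) ∩ Y|` for a partition function φ. -/
def yCount {h : ℕ} (φ : ℕ → Fin h ⊕ Fin h) (S : Finset ℕ) : ℕ :=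
  (S.filter fun x => (φ x).isLeft = true).card

/-- `|φ(S) ∩ Z|` for a partition function φ. -/
def zCount {h : ℕ} (φ : ℕ → Fin h ⊕ Fin h) (S : Finset ℕ) : ℕ :=
  (S.filter fun x => (φ x).isRight = true).card

/-- `S` is `k`-unbalanced with respect to the partition φ. -/
def kUnb {h : ℕ} (φ : ℕ → Fin h ⊕ Fin h) (k : ℕ) (S : Finset ℕ) : Prop :=
  (k : ℤ) ≤ |(yCount φ S : ℤ) - (zCount φ S : ℤ)|

/-- Extension of a partition given on `X` to all of ℕ (junk value elsewhere). -/
def extPart {h : ℕ} (hh : 0 < h) (X : Finset ℕ) (e : {x // x ∈ X} → Fin h ⊕ Fin h) :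
    ℕ → Fin h ⊕ Fin h := fun x =>
  if hx : x ∈ X then e ⟨x, hx⟩ else Sum.inl ⟨0, hh⟩

/-- Probability of an event under the uniform distribution on a finite type. -/
def unifProb {Ω : Type*} [Fintype Ω] (p : Ω → Prop) : ℝ :=
  haveI := Classical.decPred p
  ((Finset.univ.filter p).card : ℝ) / (Fintype.card Ω : ℝ)

/-- The (1,1) entry of the product `M 0 * M 1 * ⋯ * M (n-1)`. -/
def mprodVal {K : Type*} [CommSemiring K] {n w : ℕ} (hw : 0 < w)
    (M : Fin n → Matrix (Fin w) (Fin w) (MvPolynomial ℕ K)) : MvPolynomial ℕ K :=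
  (List.ofFn M).prod ⟨0, hw⟩ ⟨0, hw⟩

/-- An oblivious read-once ABP of width `w` in variables `x_1, …, x_N` with
variable order π (a permutation of `{1, …, N}`): the ℓ-th layer matrix has
entries of degree at most 1 in the single variable `x_{π(ℓ)}`. -/
def IsROABP {K : Type*} [CommSemiring K] (N w : ℕ) (π : ℕ → ℕ)
    (M : Fin N → Matrix (Fin w) (Fin w) (MvPolynomial ℕ K)) : Prop :=
  Set.BijOn π (Set.Icc 1 N) (Set.Icc 1 N) ∧
    ∀ ℓ : Fin N, ∀ i j, ∃ a b : K, M ℓ i j = C a + C b * X (π (ℓ.val + 1))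

/-- An `r`-pass syntactically multilinear ABP of width `w`. -/
def IsRPass {K : Type*} [CommSemiring K] (N w r : ℕ) (π : Fin r → ℕ → ℕ)
    (M : Fin (r * N) → Matrix (Fin w) (Fin w) (MvPolynomial ℕ K)) : Prop :=
  (∀ j, Set.BijOn (π j) (Set.Icc 1 N) (Set.Icc 1 N)) ∧
  (∀ ℓ : Fin (r * N), ∀ i j, ∃ a b : K,
      M ℓ i j = C a + C b *
        X (π ⟨ℓ.val / N, Nat.div_lt_of_lt_mul (by rw [Nat.mul_comm N r]; exact ℓ.2)⟩
            (ℓ.val % N + 1))) ∧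
  (∀ (idx : Fin (r * N + 1) → Fin w) (v : ℕ) (ℓ₁ ℓ₂ : Fin (r * N)),
      v ∈ (M ℓ₁ (idx ℓ₁.castSucc) (idx ℓ₁.succ)).vars →
      v ∈ (M ℓ₂ (idx ℓ₂.castSucc) (idx ℓ₂.succ)).vars → ℓ₁ = ℓ₂)

/-- An α-sparse ROABP with variable blocks `Xs 0, …, Xs (d-1)`, width `w` and
sparsity `t`: every entry of the `i`-th matrix is a multilinear polynomial in the
variables `Xs i` with at most `t` monomials. -/
def IsSparseROABP {K : Type*} [CommSemiring K] {d : ℕ} (w t : ℕ)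
    (Xs : Fin d → Finset ℕ) (M : Fin d → Matrix (Fin w) (Fin w) (MvPolynomial ℕ K)) : Prop :=
  ∀ ℓ i j, MLin (M ℓ i j) ∧ (M ℓ i j).vars ⊆ Xs ℓ ∧ (M ℓ i j).support.card ≤ t
/-- `S ⊆ X` is `k`-unbalanced with respect to a partition given as a map on `X`. -/
def kUnbOn {h : ℕ} (X : Finset ℕ) (e : {x // x ∈ X} → Fin h ⊕ Fin h) (k : ℕ)
    (S : Finset ℕ) : Prop :=
  (k : ℤ) ≤ |((X.attach.filter fun x => x.1 ∈ S ∧ (e x).isLeft = true).card : ℤ) -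
             ((X.attach.filter fun x => x.1 ∈ S ∧ (e x).isRight = true).card : ℤ)|

/-!
The set `S` of elements sent to `Y` is a uniformly random subset of `X` of size `N / 2`. A uniformly
random subset of the `N`-set `X`, of unrestricted size, has size `N / 2` with probability at least
`1 / N`; so dropping the restriction on the size increases the probability of an event by a factor
of at most `N`. The sets `S ∩ B_i` are then independent, and a block of size `m` is not
`k`-unbalanced with probability at most `k / √m`, as none of the at most `k` admissible sizes of
`S ∩ B_i` has probability more than `1 / √m`. Hence all blocks are balanced with probability at most
`N * ∏ i, k / √|B_i|`. When the blocks have size of order `√N` there are at least of order `√N` of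
them, and each factor is at most `N ^ (-δ)` for some `δ > 0` if `k ≤ N ^ α` with `α < 1 / 4`.
-/

section CentralBinomial

open Nat

lemma sq_centralBinom_mul_le (m : ℕ) : centralBinom m ^ 2 * (2 * m + 1) ≤ 4 ^ (2 * m) := by
  induction m with
  | zero => simp
  | succ m ih =>
    refine Nat.le_of_mul_le_mul_left ?_ (show 0 < (m + 1) ^ 2 by positivity)
    calc (m + 1) ^ 2 * (centralBinom (m + 1) ^ 2 * (2 * (m + 1) + 1))
        = ((m + 1) * centralBinom (m + 1)) ^ 2 * (2 * m + 3) := by ring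
      _ = centralBinom m ^ 2 * (2 * m + 1) * (4 * ((2 * m + 1) * (2 * m + 3))) := by
          rw [succ_mul_centralBinom_succ]; ring
      _ ≤ 4 ^ (2 * m) * (4 * (4 * (m + 1) ^ 2)) := Nat.mul_le_mul ih (by nlinarith)
      _ = (m + 1) ^ 2 * 4 ^ (2 * (m + 1)) := by ring

lemma centralBinom_succ_eq_two_mul_choose (m : ℕ) :
    centralBinom (m + 1) = 2 * (2 * m + 1).choose m := by
  rw [centralBinom, show 2 * (m + 1) = 2 * m + 1 + 1 by ring, choose_succ_succ, choose_symm_half,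
    ← two_mul]

lemma sq_choose_half_mul_le (n : ℕ) : n.choose (n / 2) ^ 2 * n ≤ 4 ^ n := by
  obtain ⟨m, rfl | rfl⟩ := n.even_or_odd'
  · have hm := sq_centralBinom_mul_le m
    rw [centralBinom] at hm
    rw [show 2 * m / 2 = m by lia]
    exact (Nat.mul_le_mul_left _ (Nat.le_succ _)).trans hm
  · have hm := sq_centralBinom_mul_le (m + 1)
    rw [centralBinom_succ_eq_two_mul_choose, show 2 * (m + 1) = 2 * m + 1 + 1 by ring,
      _root_.pow_succ 4] at hm
    rw [show (2 * m + 1) / 2 = m by lia]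
    nlinarith [Nat.zero_le ((2 * m + 1).choose m ^ 2)]

lemma choose_half_le_two_pow_div_sqrt {n : ℕ} (hn : 0 < n) :
    (n.choose (n / 2) : ℝ) ≤ 2 ^ n / √n := by
  have hsq : ((n.choose (n / 2) : ℝ) * √n) ^ 2 ≤ (2 ^ n) ^ 2 := by
    rw [mul_pow, Real.sq_sqrt n.cast_nonneg, ← pow_mul, mul_comm n 2, pow_mul]
    norm_num
    exact_mod_cast sq_choose_half_mul_le n
  rw [le_div_iff₀ (by positivity)]
  exact le_of_sq_le_sq hsq (by positivity)

end CentralBinomial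

section NearHalves

open Finset

variable {α ι : Type*} [DecidableEq α]

/-- The subsets of `b` splitting it into two parts whose sizes differ by less than `k`: the
possible values of `φ⁻¹(Y) ∩ b` for a partition `φ` with respect to which `b` is not
`k`-unbalanced. -/
def nearHalves (b : Finset α) (k : ℕ) : Finset (Finset α) :=
  {s ∈ b.powerset | |(#s : ℤ) - #(b \ s)| < k}

lemma card_nearHalves_le (b : Finset α) (k : ℕ) :
    #(nearHalves b k) ≤ k * (#b).choose (#b / 2) := by
  have hsub : nearHalves b k ⊆
      (Ico ((#b - k + 1) / 2) ((#b - k + 1) / 2 + k)).biUnion fun m => powersetCard m b := by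
    intro s hs
    simp only [nearHalves, mem_filter, mem_powerset, abs_lt] at hs
    have hcard := card_sdiff_add_card_eq_card hs.1
    simp only [mem_biUnion, mem_Ico, mem_powersetCard]
    exact ⟨#s, by lia, hs.1, rfl⟩
  calc #(nearHalves b k)
      ≤ #(Ico ((#b - k + 1) / 2) ((#b - k + 1) / 2 + k)) * (#b).choose (#b / 2) :=
        (card_le_card hsub).trans <| card_biUnion_le_card_mul _ _ _ fun m _ => by
          rw [card_powersetCard]; exact Nat.choose_le_middle _ _
    _ = k * (#b).choose (#b / 2) := by simp

lemma card_nearHalves_le_div_sqrt {b : Finset α} (hb : b.Nonempty) (k : ℕ) :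
    (#(nearHalves b k) : ℝ) ≤ k / √(#b) * 2 ^ #b :=
  calc (#(nearHalves b k) : ℝ) ≤ k * (#b).choose (#b / 2) := by
        exact_mod_cast card_nearHalves_le b k
    _ ≤ k * (2 ^ #b / √(#b)) := by gcongr; exact choose_half_le_two_pow_div_sqrt hb.card_pos
    _ = k / √(#b) * 2 ^ #b := by ring

variable [Fintype α] [Fintype ι]

lemma card_filter_forall_inter_mem_le {B : ι → Finset α}
    (hB : univ.biUnion B = univ) (𝒜 : ι → Finset (Finset α)) :
    #{s : Finset α | ∀ i, s ∩ B i ∈ 𝒜 i} ≤ ∏ i, #(𝒜 i) := by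
  classical
  rw [← Fintype.card_piFinset]
  refine card_le_card_of_injOn (fun s i => s ∩ B i) (fun s hs => ?_) fun s _ t _ hst => ?_
  · simpa using hs
  · calc s = univ.biUnion fun i => s ∩ B i := by rw [← inter_biUnion, hB, inter_univ]
      _ = univ.biUnion fun i => t ∩ B i := by simp only [congrFun hst]
      _ = t := by rw [← inter_biUnion, hB, inter_univ]

end NearHalves

section UniformProbability

open Finset

variable {Ω : Type*} [Fintype Ω]

lemma unifProb_eq_card_filter_div (p : Ω → Prop) [DecidablePred p] :
    unifProb p = (#{x | p x} : ℝ) / Fintype.card Ω := by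
  unfold unifProb
  congr!

lemma unifProb_not [Nonempty Ω] (p : Ω → Prop) :
    unifProb (fun x => ¬ p x) = 1 - unifProb p := by
  classical
  have hcard : (#{x | p x} : ℝ) + #{x | ¬ p x} = Fintype.card Ω := by
    exact_mod_cast card_filter_add_card_filter_not p
  have hΩ : (Fintype.card Ω : ℝ) ≠ 0 := by exact_mod_cast Fintype.card_ne_zero
  rw [unifProb_eq_card_filter_div, unifProb_eq_card_filter_div, eq_sub_iff_add_eq, ← add_div,
    add_comm, hcard, div_self hΩ]

variable {α ι : Type*} [Fintype α] [DecidableEq α] [Fintype ι]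

lemma unifProb_forall_inter_mem_nearHalves_le {B : ι → Finset α}
    (hdisj : Pairwise fun i j => Disjoint (B i) (B j)) (hB : univ.biUnion B = univ)
    (hne : ∀ i, (B i).Nonempty) (k : ℕ) :
    unifProb (fun s : Finset α => ∀ i, s ∩ B i ∈ nearHalves (B i) k) ≤
      ∏ i, (k : ℝ) / √(#(B i)) := by
  classical
  have hcard : ∑ i, #(B i) = Fintype.card α := by
    rw [← card_biUnion fun i _ j _ hij => hdisj hij, hB, card_univ]
  rw [unifProb_eq_card_filter_div, Fintype.card_finset, ← hcard, Nat.cast_pow,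
    div_le_iff₀ (by positivity)]
  calc (#{s : Finset α | ∀ i, s ∩ B i ∈ nearHalves (B i) k} : ℝ)
      ≤ ∏ i, (#(nearHalves (B i) k) : ℝ) := by
        exact_mod_cast card_filter_forall_inter_mem_le hB _
    _ ≤ ∏ i, ((k : ℝ) / √(#(B i)) * 2 ^ #(B i)) :=
        prod_le_prod (fun _ _ => by positivity) fun i _ => card_nearHalves_le_div_sqrt (hne i) k
    _ = (∏ i, (k : ℝ) / √(#(B i))) * (2 : ℕ) ^ ∑ i, #(B i) := by
        rw [prod_mul_distrib, prod_pow_eq_pow_sum, Nat.cast_ofNat]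

end UniformProbability

section LeftSet

open Finset
open scoped Nat

variable {α β γ : Type*} [Fintype α]

/-- The set `φ⁻¹(Y)` of elements sent to the left summand by a partition `φ : α → Y ∪ Z`; up to
permutations of `Y` and of `Z` it determines `φ`. -/
def leftSet (e : α ≃ β ⊕ γ) : Finset α := {x | (e x).isLeft}

lemma mem_leftSet {e : α ≃ β ⊕ γ} {x : α} : x ∈ leftSet e ↔ (e x).isLeft := by
  simp [leftSet]

lemma exists_trans_sumCongr_eq_of_leftSet_eq [Finite β] [Finite γ] {e e' : α ≃ β ⊕ γ}
    (h : leftSet e' = leftSet e) :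
    ∃ (σ : Equiv.Perm β) (τ : Equiv.Perm γ), e.trans (σ.sumCongr τ) = e' := by
  have hmaps : Set.MapsTo (e.symm.trans e' : Equiv.Perm (β ⊕ γ))
      (Set.range Sum.inl) (Set.range Sum.inl) := by
    rintro _ ⟨y, rfl⟩
    have hy : e.symm (Sum.inl y) ∈ leftSet e' := by simp [h, mem_leftSet]
    obtain ⟨z, hz⟩ := Sum.isLeft_iff.1 (mem_leftSet.1 hy)
    exact ⟨z, hz.symm⟩
  obtain ⟨⟨σ, τ⟩, hστ⟩ := Equiv.Perm.mem_sumCongrHom_range_of_perm_mapsTo_inl hmaps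
  refine ⟨σ, τ, ?_⟩
  rw [show σ.sumCongr τ = e.symm.trans e' from hστ, ← Equiv.trans_assoc, Equiv.self_trans_symm,
    Equiv.refl_trans]

variable [DecidableEq α]

section Card

variable [Fintype β] [Fintype γ] [DecidableEq β] [DecidableEq γ]

lemma card_filter_leftSet_eq_le (s : Finset α) :
    #{e : α ≃ β ⊕ γ | leftSet e = s} ≤ (Fintype.card β)! * (Fintype.card γ)! := by
  obtain hempty | ⟨e, he⟩ := ({e : α ≃ β ⊕ γ | leftSet e = s} : Finset _).eq_empty_or_nonempty
  · simp [hempty]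
  have hsub : ({e : α ≃ β ⊕ γ | leftSet e = s} : Finset _) ⊆
      univ.image fun στ : Equiv.Perm β × Equiv.Perm γ => e.trans (στ.1.sumCongr στ.2) := by
    intro e' he'
    obtain ⟨σ, τ, hστ⟩ := exists_trans_sumCongr_eq_of_leftSet_eq
      ((mem_filter.1 he').2.trans (mem_filter.1 he).2.symm)
    exact mem_image.2 ⟨(σ, τ), mem_univ _, hστ⟩
  refine (card_le_card hsub).trans (card_image_le.trans ?_)
  simp [Fintype.card_perm]

lemma card_filter_leftSet_le (P : Finset α → Prop) [DecidablePred P] :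
    #{e : α ≃ β ⊕ γ | P (leftSet e)} ≤
      (Fintype.card β)! * (Fintype.card γ)! * #{s | P s} := by
  refine card_le_mul_card_image_of_maps_to (f := leftSet) (fun e he => by simpa using he) _
    fun s _ => ?_
  grw [filter_subset_filter _ (subset_univ _), card_filter_leftSet_eq_le]

end Card

variable {h : ℕ}

lemma card_equiv_sum_fin (hα : Fintype.card α = 2 * h) :
    Fintype.card (α ≃ Fin h ⊕ Fin h) = h ! * h ! * h.centralBinom := by
  have e : α ≃ Fin h ⊕ Fin h := Fintype.equivOfCardEq (by simp [hα, two_mul])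
  have hfact := Nat.choose_mul_factorial_mul_factorial (show h ≤ 2 * h by lia)
  rw [show 2 * h - h = h by lia] at hfact
  rw [Fintype.card_equiv e, hα, ← hfact, Nat.centralBinom]
  ring

lemma unifProb_leftSet_le (hh : 0 < h) (hα : Fintype.card α = 2 * h) (P : Finset α → Prop) :
    unifProb (fun e : α ≃ Fin h ⊕ Fin h => P (leftSet e)) ≤ (2 * h : ℕ) * unifProb P := by
  classical
  have hcb : (0 : ℝ) < h.centralBinom := by exact_mod_cast h.centralBinom_pos
  have hfour : (4 : ℝ) ^ h ≤ (2 * h : ℕ) * h.centralBinom := by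
    exact_mod_cast Nat.four_pow_le_two_mul_self_mul_centralBinom h hh
  rw [unifProb_eq_card_filter_div, unifProb_eq_card_filter_div, card_equiv_sum_fin hα,
    Fintype.card_finset, hα, pow_mul, show 2 ^ 2 = 4 by rfl]
  push_cast at hfour ⊢
  calc (#{e : α ≃ Fin h ⊕ Fin h | P (leftSet e)} : ℝ) / (h ! * h ! * h.centralBinom)
      ≤ h ! * h ! * #{s | P s} / (h ! * h ! * h.centralBinom) := by
        gcongr
        simpa using (Nat.cast_le (α := ℝ)).2
          (card_filter_leftSet_le (β := Fin h) (γ := Fin h) P)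
    _ = #{s | P s} / h.centralBinom := by field_simp
    _ ≤ 2 * h * (#{s | P s} / 4 ^ h) := by
        rw [mul_div_assoc', div_le_div_iff₀ hcb (by positivity)]
        nlinarith [(#{s | P s}).cast_nonneg (α := ℝ)]

end LeftSet

section Blocks

open Finset

variable {X : Finset ℕ} {h : ℕ}

lemma not_kUnbOn_iff (e : X ≃ Fin h ⊕ Fin h) (k : ℕ) (S : Finset ℕ) :
    ¬ kUnbOn X (fun x => e x) k S ↔
      leftSet e ∩ S.subtype (· ∈ X) ∈ nearHalves (S.subtype (· ∈ X)) k := by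
  have hleft : ({x ∈ X.attach | x.1 ∈ S ∧ (e x).isLeft} : Finset X) =
      leftSet e ∩ S.subtype (· ∈ X) := by
    ext x; simp [mem_leftSet, and_comm]
  have hright : ({x ∈ X.attach | x.1 ∈ S ∧ (e x).isRight} : Finset X) =
      S.subtype (· ∈ X) \ (leftSet e ∩ S.subtype (· ∈ X)) := by
    ext x; simp +contextual [mem_leftSet]
  rw [kUnbOn, not_le, hleft, hright, nearHalves, mem_filter, mem_powerset,
    and_iff_right inter_subset_right]

lemma unifProb_forall_not_kUnbOn_le {ι : Type*} [Fintype ι] {B : ι → Finset ℕ} (hh : 0 < h)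
    (hX : #X = 2 * h) (hdisj : Pairwise fun i j => Disjoint (B i) (B j))
    (hB : univ.biUnion B = X) (hne : ∀ i, (B i).Nonempty) (k : ℕ) :
    unifProb (fun e : X ≃ Fin h ⊕ Fin h => ∀ i, ¬ kUnbOn X (fun x => e x) k (B i)) ≤
      (2 * h : ℕ) * ∏ i, (k : ℝ) / √(#(B i)) := by
  have hsub (i : ι) : B i ⊆ X := hB ▸ subset_biUnion_of_mem B (mem_univ i)
  let B' (i : ι) : Finset X := (B i).subtype (· ∈ X)
  have hcard (i : ι) : #(B' i) = #(B i) := by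
    rw [card_subtype, filter_true_of_mem fun x hx => hsub i hx]
  have hne' (i : ι) : (B' i).Nonempty := by
    rw [← card_pos, hcard]; exact (hne i).card_pos
  have hdisj' : Pairwise fun i j => Disjoint (B' i) (B' j) := fun i j hij =>
    disjoint_left.2 fun x hi hj =>
      disjoint_left.1 (hdisj hij) (mem_subtype.1 hi) (mem_subtype.1 hj)
  have hB' : univ.biUnion B' = univ := by
    ext ⟨x, hx⟩
    rw [← hB] at hx
    simpa [B'] using hx
  calc unifProb (fun e : X ≃ Fin h ⊕ Fin h => ∀ i, ¬ kUnbOn X (fun x => e x) k (B i))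
      = unifProb (fun e : X ≃ Fin h ⊕ Fin h =>
          ∀ i, leftSet e ∩ B' i ∈ nearHalves (B' i) k) := by simp only [not_kUnbOn_iff, B']
    _ ≤ (2 * h : ℕ) * unifProb fun s => ∀ i, s ∩ B' i ∈ nearHalves (B' i) k :=
        unifProb_leftSet_le hh ((Fintype.card_coe X).trans hX)
          fun s => ∀ i, s ∩ B' i ∈ nearHalves (B' i) k
    _ ≤ (2 * h : ℕ) * ∏ i, (k : ℝ) / √(#(B' i)) := by
        gcongr
        exact unifProb_forall_inter_mem_nearHalves_le hdisj' hB' hne' k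
    _ = (2 * h : ℕ) * ∏ i, (k : ℝ) / √(#(B i)) := by simp only [hcard]

end Blocks

section Asymptotics

open Filter Real

variable {a b α δ x : ℝ}

lemma sqrt_le_mul_card {ι : Type*} [Fintype ι] {m : ι → ℝ} (hx : 0 < x) (hsum : ∑ i, m i = x)
    (hm : ∀ i, m i ≤ b * √x) : √x ≤ b * Fintype.card ι := by
  have hle : √x * √x ≤ b * Fintype.card ι * √x :=
    calc √x * √x = ∑ i, m i := by rw [mul_self_sqrt hx.le, hsum]
      _ ≤ ∑ _i : ι, b * √x := Finset.sum_le_sum fun i _ => hm i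
      _ = b * Fintype.card ι * √x := by simp; ring
  exact le_of_mul_le_mul_right hle (sqrt_pos.2 hx)

lemma eventually_rpow_div_sqrt_le (ha : 0 < a) (hα : α < 1 / 4) :
    ∀ᶠ x : ℝ in atTop, x ^ α / √(a * √x) ≤ x ^ (-((1 / 4 - α) / 2)) := by
  filter_upwards [(tendsto_rpow_atTop (show 0 < (1 / 4 - α) / 2 by linarith)).eventually_ge_atTop
    (1 / √a), eventually_gt_atTop 0] with x hlarge hx
  have hroot : √(√x) = x ^ (1 / 4 : ℝ) := by
    rw [sqrt_eq_rpow, sqrt_eq_rpow, ← rpow_mul hx.le]; norm_num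
  calc x ^ α / √(a * √x) = x ^ (α - 1 / 4) * (1 / √a) := by
        rw [sqrt_mul ha.le, hroot, rpow_sub hx]
        field_simp
    _ ≤ x ^ (α - 1 / 4) * x ^ ((1 / 4 - α) / 2) := by gcongr
    _ = x ^ (-((1 / 4 - α) / 2)) := by rw [← rpow_add hx]; ring_nf

lemma eventually_mul_rpow_pow_le (hb : 0 < b) (hδ : 0 < δ) :
    ∀ᶠ x : ℝ in atTop, ∀ t : ℕ, √x ≤ b * t →
      x * (x ^ (-δ)) ^ t ≤ 2 ^ (-(δ / (2 * b) * √x * logb 2 x)) := by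
  filter_upwards [tendsto_sqrt_atTop.eventually_ge_atTop (2 * b / δ), eventually_ge_atTop 1]
    with x hlarge hx t ht
  have hx0 : 0 < x := by linarith
  have hone : 1 ≤ δ / (2 * b) * √x := by
    rw [div_le_iff₀ hδ] at hlarge
    rw [div_mul_eq_mul_div, one_le_div (by positivity)]
    linarith
  have hcount : 2 * (δ / (2 * b) * √x) ≤ δ * t := by
    calc 2 * (δ / (2 * b) * √x) = δ / b * √x := by field_simp
      _ ≤ δ / b * (b * t) := by gcongr
      _ = δ * t := by field_simp
  calc x * (x ^ (-δ)) ^ t = x ^ (1 - δ * t) := by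
        rw [← rpow_mul_natCast hx0.le, neg_mul, sub_eq_add_neg, rpow_add hx0, rpow_one]
    _ ≤ x ^ (-(δ / (2 * b) * √x)) := rpow_le_rpow_of_exponent_le hx (by linarith)
    _ = 2 ^ (-(δ / (2 * b) * √x * logb 2 x)) := by
        rw [mul_comm _ (logb 2 x), neg_mul_eq_mul_neg (logb 2 x), rpow_mul two_pos.le,
          rpow_logb two_pos (by norm_num) hx0]

lemma eventually_mul_prod_div_sqrt_le (ha : 0 < a) (hb : 0 < b) (hα : α < 1 / 4) :
    ∀ᶠ x : ℝ in atTop, ∀ (ι : Type*) [Fintype ι] (m : ι → ℝ), ∑ i, m i = x →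
      (∀ i, a * √x ≤ m i ∧ m i ≤ b * √x) → ∀ k : ℝ, 0 ≤ k → k ≤ x ^ α →
        x * ∏ i, k / √(m i) ≤ 2 ^ (-((1 / 4 - α) / (4 * b) * √x * logb 2 x)) := by
  have hδ : 0 < (1 / 4 - α) / 2 := by linarith
  filter_upwards [eventually_rpow_div_sqrt_le ha hα, eventually_mul_rpow_pow_le hb hδ,
    eventually_gt_atTop 0] with x hfactor hpow hx ι _ m hsum hm k hk hkx
  have hblock (i : ι) : k / √(m i) ≤ x ^ (-((1 / 4 - α) / 2)) :=
    (div_le_div₀ (by positivity) hkx (by positivity) (sqrt_le_sqrt (hm i).1)).trans hfactor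
  calc x * ∏ i, k / √(m i)
      ≤ x * (x ^ (-((1 / 4 - α) / 2))) ^ Fintype.card ι := by
        gcongr
        exact (Finset.prod_le_prod (fun _ _ => by positivity) fun i _ => hblock i).trans_eq
          (Finset.prod_const _)
    _ ≤ 2 ^ (-((1 / 4 - α) / 2 / (2 * b) * √x * logb 2 x)) :=
        hpow _ (sqrt_le_mul_card hx hsum fun i => (hm i).2)
    _ = 2 ^ (-((1 / 4 - α) / (4 * b) * √x * logb 2 x)) := by
        rw [div_div, ← mul_assoc]; norm_num

lemma eventually_logb_two_le_mul_sqrt {ε : ℝ} (hε : 0 < ε) :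
    ∀ᶠ x : ℝ in atTop, logb 2 x ≤ ε * √x := by
  have hlog : 0 < log 2 := log_pos one_lt_two
  filter_upwards [(isLittleO_log_rpow_atTop (one_half_pos (α := ℝ))).bound
    (mul_pos hε hlog)] with x hx
  rw [← sqrt_eq_rpow, norm_of_nonneg (sqrt_nonneg x)] at hx
  rw [logb, div_le_iff₀ hlog]
  linarith [le_norm_self (log x)]

end Asymptotics

theorem exists_unbalanced_block_general {a b α : ℝ} (ha : 0 < a) (hb : 0 < b) (hα : α < 1 / 4) :
    ∃ c : ℝ, 0 < c ∧ ∃ N₀ : ℕ, ∀ (N h : ℕ), N₀ ≤ N → N = 2 * h →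
      ∀ (X : Finset ℕ), X.card = N →
      ∀ (t : ℕ) (B : Fin t → Finset ℕ),
        (∀ i j, i ≠ j → Disjoint (B i) (B j)) →
        Finset.univ.biUnion B = X →
        (∀ i, a * √N ≤ ((B i).card : ℝ) ∧ ((B i).card : ℝ) ≤ b * √N) →
      ∀ (k : ℕ), (k : ℝ) ≤ (N : ℝ) ^ α →
        1 - (2 : ℝ) ^ (-(c * √N * Real.logb 2 N)) ≤
          unifProb (fun e : {x // x ∈ X} ≃ (Fin h ⊕ Fin h) =>
            ∃ i, kUnbOn X (fun x => e x) k (B i)) := by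
  have hc : 0 < (1 / 4 - α) / (4 * b) := div_pos (by linarith) (by linarith)
  obtain ⟨N₀, hN₀⟩ := Filter.eventually_atTop.1 <| tendsto_natCast_atTop_atTop.eventually <|
    eventually_mul_prod_div_sqrt_le ha hb hα
  refine ⟨_, hc, max N₀ 1, fun N h hN hNh X hX t B hdisj hB hcard k hk => ?_⟩
  have hNpos : 0 < N := le_of_max_le_right hN
  have hne (i : Fin t) : (B i).Nonempty := by
    have hpos : (0 : ℝ) < (B i).card := lt_of_lt_of_le (by positivity) (hcard i).1
    exact Finset.card_pos.1 (by exact_mod_cast hpos)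
  have hsum : ∑ i, ((B i).card : ℝ) = N := by
    rw [← hX, ← hB, Finset.card_biUnion fun i _ j _ => hdisj i j, Nat.cast_sum]
  have : Nonempty ({x // x ∈ X} ≃ Fin h ⊕ Fin h) :=
    ⟨Fintype.equivOfCardEq (by simp [hX, hNh, two_mul])⟩
  have hbalanced := unifProb_forall_not_kUnbOn_le (by lia) (hX.trans hNh) hdisj hB hne k
  rw [← hNh] at hbalanced
  have hsmall := hN₀ N (le_of_max_le_left hN) _ _ hsum hcard k k.cast_nonneg hk
  simp only [← not_exists, unifProb_not] at hbalanced
  linarith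

/-- With high probability under a random partition, one of the blocks is k-unbalanced. -/
theorem exists_unbalanced_block :
    ∃ c : ℝ, 0 < c ∧ ∃ N₀ : ℕ, ∀ (N h : ℕ), N₀ ≤ N → N = 2 * h →
      ∀ (X : Finset ℕ), X.card = N →
      ∀ (t : ℕ) (B : Fin t → Finset ℕ),
        (∀ i j, i ≠ j → Disjoint (B i) (B j)) →
        Finset.univ.biUnion B = X →
        (∀ i, Real.sqrt N - Real.logb 2 N ≤ ((B i).card : ℝ) ∧
              ((B i).card : ℝ) ≤ Real.sqrt N + Real.logb 2 N) →
      ∀ (k : ℕ), 1 ≤ k → (k : ℝ) ≤ (N : ℝ) ^ ((1 : ℝ)/5) →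
        1 - (2 : ℝ) ^ (-(c * Real.sqrt N * Real.logb 2 N)) ≤
          unifProb (fun e : {x // x ∈ X} ≃ (Fin h ⊕ Fin h) =>
            ∃ i, kUnbOn X (fun x => e x) k (B i)) := by
  obtain ⟨c, hc, N₁, hN₁⟩ := exists_unbalanced_block_general (a := 1 / 2) (b := 3 / 2)
    (α := 1 / 5) (by norm_num) (by norm_num) (by norm_num)
  obtain ⟨N₂, hN₂⟩ := Filter.eventually_atTop.1 <| tendsto_natCast_atTop_atTop.eventually <|
    eventually_logb_two_le_mul_sqrt one_half_pos
  refine ⟨c, hc, max N₁ N₂, fun N h hN hNh X hX t B hdisj hB hcard k _ hk => ?_⟩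
  have hlog := hN₂ N (le_of_max_le_right hN)
  exact hN₁ N h (le_of_max_le_left hN) hNh X hX t B hdisj hB
    (fun i => ⟨by linarith [(hcard i).1], by linarith [(hcard i).2]⟩) k hk

end
end

section
/- There are constants c, c' > 0 such that for all sufficiently large even N, every 1/10 < α ≤ 1/2 with d = ⌈N^α⌉ dividing N, and every field K the following holds. If f ∈ K[x_1,…,x_N] is computed by an α-sparse ROABP of width w ≥ 2 and sparsity t, then for φ drawn from D, with probability at least 1 − 2^{−c'·N^{1/10}·log N} one has rank(M_{f^φ}) ≤ w^{c·log N}·t·2^{N/2 − N^{(1−α)/4}/2}. -/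
open MvPolynomial

noncomputable section

/-!
The bound holds for every partition, not only for a random one. Exactly one factor of the product,
the first row of `M₀`, involves the first block `X₀`, so the monomials of `f` restrict to `X₀` in at
most `w * t` ways. By pigeonhole at least half of `X₀` is sent to `Y`, or at least half to `Z`.
In the first case a nonzero row of the partial derivative matrix is determined by one of the `w * t`
restrictions together with a subset of the at most `N/2 - |X₀|/2` remaining variables of `Y`, and in
the second case the same count applies to the columns. Since `|X₀| = N/d` is of order `N^(1-α)`,
this saves more than the claim requires.
-/

section MatrixRank

variable {K m n : Type*} [CommSemiring K] [StrongRankCondition K] [Fintype n]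

lemma rank_le_card_of_row_eq_zero (A : Matrix m n K) (s : Finset m)
    (hs : ∀ i ∉ s, ∀ j, A i j = 0) : A.rank ≤ s.card := by
  classical
  have hfactor : (1 : Matrix m m K).submatrix id ((↑) : s → m) *
      A.submatrix ((↑) : s → m) id = A := by
    ext i j
    simp only [Matrix.mul_apply, Matrix.submatrix_apply, Matrix.one_apply, id_eq, ite_mul,
      one_mul, zero_mul]
    rw [Finset.sum_coe_sort s fun k => if i = k then A k j else 0, Finset.sum_ite_eq]
    split_ifs with hi
    · rfl
    · exact (hs i hi j).symm
  calc A.rank ≤ ((1 : Matrix m m K).submatrix id ((↑) : s → m)).rank := by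
        conv_lhs => rw [← hfactor]
        exact Matrix.rank_mul_le_left _ _
    _ ≤ s.card := (Matrix.rank_le_card_width _).trans_eq (Fintype.card_coe s)

lemma rank_le_card_of_col_eq_zero (A : Matrix m n K) (s : Finset n)
    (hs : ∀ j ∉ s, ∀ i, A i j = 0) : A.rank ≤ s.card := by
  classical
  have hfactor : A.submatrix id ((↑) : s → n) *
      (1 : Matrix n n K).submatrix ((↑) : s → n) id = A := by
    ext i j
    simp only [Matrix.mul_apply, Matrix.submatrix_apply, Matrix.one_apply, id_eq, mul_ite,
      mul_one, mul_zero]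
    rw [Finset.sum_coe_sort s fun k => if k = j then A i k else 0, Finset.sum_ite_eq']
    split_ifs with hj
    · rfl
    · exact (hs j hj i).symm
  calc A.rank ≤ (A.submatrix id ((↑) : s → n)).rank := by
        conv_lhs => rw [← hfactor]
        exact Matrix.rank_mul_le_left _ _
    _ ≤ s.card := (Matrix.rank_le_card_width _).trans_eq (Fintype.card_coe s)

end MatrixRank

section RestrictedSupport

variable {σ τ R : Type*} [CommSemiring R]

open Classical in
/-- The restrictions to `B` of the exponent vectors of `f`, extended by zero outside `B`. Its size
counts the distinct ways in which the monomials of `f` meet the variables of `B`. -/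
def restrictedSupport (B : Set σ) (f : MvPolynomial σ R) : Finset (σ →₀ ℕ) :=
  f.support.image fun u => u.filter (· ∈ B)

lemma card_restrictedSupport_le (B : Set σ) (f : MvPolynomial σ R) :
    (restrictedSupport B f).card ≤ f.support.card :=
  by classical exact Finset.card_image_le

lemma card_restrictedSupport_sum_le {ι : Type*} (B : Set σ) (s : Finset ι)
    (f : ι → MvPolynomial σ R) :
    (restrictedSupport B (∑ i ∈ s, f i)).card ≤ ∑ i ∈ s, (restrictedSupport B (f i)).card := by
  classical
  calc (restrictedSupport B (∑ i ∈ s, f i)).card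
      ≤ (s.biUnion fun i => restrictedSupport B (f i)).card := by
        simp only [restrictedSupport, ← Finset.biUnion_image]
        exact Finset.card_le_card (Finset.image_subset_image support_sum)
    _ ≤ ∑ i ∈ s, (restrictedSupport B (f i)).card := Finset.card_biUnion_le

lemma restrictedSupport_mul_subset (B : Set σ) (p : MvPolynomial σ R) {q : MvPolynomial σ R}
    (hq : Disjoint (q.vars : Set σ) B) : restrictedSupport B (p * q) ⊆ restrictedSupport B p := by
  classical
  intro v hv
  obtain ⟨u, hu, rfl⟩ := Finset.mem_image.1 hv
  obtain ⟨a, ha, r, hr, rfl⟩ := Finset.mem_add.1 (support_mul p q hu)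
  have hrB : r.filter (· ∈ B) = 0 := by
    refine (Finsupp.filter_eq_zero_iff _ _).2 fun x hx => by_contra fun hrx => ?_
    exact Set.disjoint_left.1 hq
      ((mem_vars_iff_mem_support x).2 ⟨r, hr, Finsupp.mem_support_iff.2 hrx⟩) hx
  rw [Finsupp.filter_add, hrB, add_zero]
  exact Finset.mem_image_of_mem _ ha

lemma filter_mapDomain {M : Type*} [AddCommMonoid M] (φ : σ → τ) (p : τ → Prop)
    [DecidablePred p] (u : σ →₀ M) :
    (u.mapDomain φ).filter p = (u.filter fun x => p (φ x)).mapDomain φ := by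
  induction u using Finsupp.induction_linear with
  | zero => simp only [Finsupp.mapDomain_zero, Finsupp.filter_zero]
  | add u v hu hv => simp only [Finsupp.mapDomain_add, Finsupp.filter_add, hu, hv]
  | single x a => by_cases hx : p (φ x) <;> simp [hx]

lemma card_restrictedSupport_rename_le (φ : σ → τ) (B : Set τ) (f : MvPolynomial σ R) :
    (restrictedSupport B (rename φ f)).card ≤ (restrictedSupport (φ ⁻¹' B) f).card := by
  classical
  refine (Finset.card_le_card fun v hv => ?_).trans
    (Finset.card_image_le (f := Finsupp.mapDomain φ))
  obtain ⟨_, hw, rfl⟩ := Finset.mem_image.1 hv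
  obtain ⟨u, rfl, hu⟩ := coeff_rename_ne_zero φ f _ (mem_support_iff.1 hw)
  rw [filter_mapDomain]
  exact Finset.mem_image_of_mem _ (Finset.mem_image_of_mem _ (mem_support_iff.2 hu))

/-- A member of `𝒮` is determined by its part in `I`, which the restriction to `B` of a witnessing
exponent vector records, and its part outside `I`. -/
lemma card_le_card_restrictedSupport_mul_two_pow {α : Type*} [Fintype α] (f : MvPolynomial σ R)
    (B : Set σ) (ι : α → σ) (I : Finset α) (hI : ∀ i ∈ I, ι i ∈ B) (𝒮 : Finset (Finset α))
    (h𝒮 : ∀ S ∈ 𝒮, ∃ u ∈ f.support, ∀ i, u (ι i) = (S : Set α).indicator 1 i) :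
    𝒮.card ≤ (restrictedSupport B f).card * 2 ^ (Fintype.card α - I.card) := by
  classical
  let reconstruct (p : (σ →₀ ℕ) × Finset α) : Finset α := {i ∈ I | p.1 (ι i) = 1} ∪ p.2
  have hsub : 𝒮 ⊆ (restrictedSupport B f ×ˢ Iᶜ.powerset).image reconstruct := by
    intro S hS
    obtain ⟨u, hu, huS⟩ := h𝒮 S hS
    refine Finset.mem_image.2 ⟨(u.filter (· ∈ B), S \ I), ?_, ?_⟩
    · exact Finset.mk_mem_product (Finset.mem_image_of_mem _ hu)
        (Finset.mem_powerset.2 fun i hi => by simp_all)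
    · ext i
      by_cases hiI : i ∈ I <;> simp [reconstruct, hiI, huS, hI, Set.indicator_apply]
  calc 𝒮.card ≤ (restrictedSupport B f ×ˢ Iᶜ.powerset).card :=
        (Finset.card_le_card hsub).trans Finset.card_image_le
    _ = (restrictedSupport B f).card * 2 ^ (Fintype.card α - I.card) := by
        rw [Finset.card_product, Finset.card_powerset, Finset.card_compl]

end RestrictedSupport

section PartialDerivativeMatrix

variable {K : Type*} [CommSemiring K] {h : ℕ}

lemma exists_mem_support_of_pdm_ne_zero {f : MvPolynomial (Fin h ⊕ Fin h) K}
    {S T : Finset (Fin h)} (hST : pdm f S T ≠ 0) :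
    ∃ u ∈ f.support, (∀ i, u (Sum.inl i) = (S : Set (Fin h)).indicator 1 i) ∧
      ∀ j, u (Sum.inr j) = (T : Set (Fin h)).indicator 1 j :=
  ⟨_, mem_support_iff.2 hST, by simp [Finsupp.single_apply, Set.indicator_apply],
    by simp [Finsupp.single_apply, Set.indicator_apply]⟩

variable [StrongRankCondition K]

lemma rank_pdm_le_toLeft (f : MvPolynomial (Fin h ⊕ Fin h) K) (B : Finset (Fin h ⊕ Fin h)) :
    (pdm f).rank ≤ (restrictedSupport (B : Set _) f).card * 2 ^ (h - B.toLeft.card) := by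
  classical
  refine (rank_le_card_of_row_eq_zero (pdm f) {S | ∃ T, pdm f S T ≠ 0} (by simp)).trans ?_
  have hcount := card_le_card_restrictedSupport_mul_two_pow f B Sum.inl B.toLeft (by simp)
    {S | ∃ T, pdm f S T ≠ 0} fun S hS => by
      obtain ⟨T, hST⟩ := (Finset.mem_filter.1 hS).2
      obtain ⟨u, hu, huS, -⟩ := exists_mem_support_of_pdm_ne_zero hST
      exact ⟨u, hu, huS⟩
  rwa [Fintype.card_fin] at hcount

lemma rank_pdm_le_toRight (f : MvPolynomial (Fin h ⊕ Fin h) K) (B : Finset (Fin h ⊕ Fin h)) :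
    (pdm f).rank ≤ (restrictedSupport (B : Set _) f).card * 2 ^ (h - B.toRight.card) := by
  classical
  refine (rank_le_card_of_col_eq_zero (pdm f) {T | ∃ S, pdm f S T ≠ 0} (by simp)).trans ?_
  have hcount := card_le_card_restrictedSupport_mul_two_pow f B Sum.inr B.toRight (by simp)
    {T | ∃ S, pdm f S T ≠ 0} fun T hT => by
      obtain ⟨S, hST⟩ := (Finset.mem_filter.1 hT).2
      obtain ⟨u, hu, -, huT⟩ := exists_mem_support_of_pdm_ne_zero hST
      exact ⟨u, hu, huT⟩
  rwa [Fintype.card_fin] at hcount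

lemma rank_pdm_le_two_rpow_sub_half_card (f : MvPolynomial (Fin h ⊕ Fin h) K)
    (B : Finset (Fin h ⊕ Fin h)) :
    ((pdm f).rank : ℝ) ≤
      (restrictedSupport (B : Set _) f).card * 2 ^ ((h : ℝ) - B.card / 2) := by
  set r := (restrictedSupport (B : Set _) f).card
  have rank_le_of_half {k : ℕ} (hkh : k ≤ h) (hBk : B.card ≤ 2 * k)
      (hrank : (pdm f).rank ≤ r * 2 ^ (h - k)) :
      ((pdm f).rank : ℝ) ≤ r * 2 ^ ((h : ℝ) - B.card / 2) := by
    have hBk' : (B.card : ℝ) ≤ 2 * k := mod_cast hBk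
    calc ((pdm f).rank : ℝ) ≤ r * 2 ^ (h - k) := mod_cast hrank
      _ = r * 2 ^ ((h : ℝ) - k) := by rw [← Nat.cast_sub hkh, Real.rpow_natCast]
      _ ≤ r * 2 ^ ((h : ℝ) - B.card / 2) := by
          gcongr _ * 2 ^ ?_
          · exact one_le_two
          · linarith
  have hcard : B.toLeft.card + B.toRight.card = B.card := Finset.card_toLeft_add_card_toRight
  rcases le_total B.toLeft.card B.toRight.card with hle | hle
  · exact rank_le_of_half (card_finset_fin_le _) (by lia) (rank_pdm_le_toRight f B)
  · exact rank_le_of_half (card_finset_fin_le _) (by lia) (rank_pdm_le_toLeft f B)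

end PartialDerivativeMatrix

section SparseROABP

variable {K : Type*} [CommSemiring K] {w t : ℕ}

lemma vars_list_prod_apply_subset {σ n : Type*} [Fintype n] [DecidableEq n] {s : Set σ}
    {L : List (Matrix n n (MvPolynomial σ K))} (hL : ∀ A ∈ L, ∀ i j, ((A i j).vars : Set σ) ⊆ s)
    (i j : n) : ((L.prod i j).vars : Set σ) ⊆ s := by
  have hprod : L.prod ∈ (supported K s).matrix :=
    Subalgebra.list_prod_mem _ fun A hA i j => mem_supported.2 (hL A hA i j)
  exact mem_supported.1 (hprod i j)

lemma card_restrictedSupport_mprodVal_le {d : ℕ} (hw : 0 < w) (B : Set ℕ)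
    (M : Fin (d + 1) → Matrix (Fin w) (Fin w) (MvPolynomial ℕ K))
    (hsparse : ∀ j, (M 0 ⟨0, hw⟩ j).support.card ≤ t)
    (hB : ∀ (ℓ : Fin d) i j, Disjoint ((M ℓ.succ i j).vars : Set ℕ) B) :
    (restrictedSupport B (mprodVal hw M)).card ≤ w * t := by
  set P := (List.ofFn fun ℓ : Fin d => M ℓ.succ).prod
  have hPB (j : Fin w) : Disjoint ((P j ⟨0, hw⟩).vars : Set ℕ) B := by
    refine Set.disjoint_left.2 (vars_list_prod_apply_subset (s := Bᶜ) ?_ _ _)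
    intro A hA i j
    obtain ⟨ℓ, rfl⟩ := (List.mem_ofFn' _ _).1 hA
    exact Set.disjoint_left.1 (hB ℓ i j)
  have hexpand : mprodVal hw M = ∑ j, M 0 ⟨0, hw⟩ j * P j ⟨0, hw⟩ := by
    rw [mprodVal, List.ofFn_succ, List.prod_cons, Matrix.mul_apply]
  calc (restrictedSupport B (mprodVal hw M)).card
      ≤ ∑ j, (restrictedSupport B (M 0 ⟨0, hw⟩ j * P j ⟨0, hw⟩)).card :=
        hexpand ▸ card_restrictedSupport_sum_le B _ _
    _ ≤ ∑ _j : Fin w, t := Finset.sum_le_sum fun j _ =>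
        (Finset.card_le_card (restrictedSupport_mul_subset B _ (hPB j))).trans
          ((card_restrictedSupport_le B _).trans (hsparse j))
    _ = w * t := by simp

lemma extPart_injOn {h : ℕ} (hh : 0 < h) {X : Finset ℕ} {e : {x // x ∈ X} → Fin h ⊕ Fin h}
    (he : Function.Injective e) : Set.InjOn (extPart hh X e) X := by
  intro x hx y hy hxy
  simp only [Finset.mem_coe] at hx hy
  simpa [extPart, hx, hy, he.eq_iff] using hxy

lemma rank_pdm_rename_mprodVal_le [StrongRankCondition K] {d h : ℕ} (hh : 0 < h) (hw : 0 < w)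
    {X : Finset ℕ} {e : {x // x ∈ X} → Fin h ⊕ Fin h} (he : Function.Injective e)
    {Xs : Fin (d + 1) → Finset ℕ} (hX : ∀ ℓ, Xs ℓ ⊆ X)
    (hdis : ∀ ℓ : Fin d, Disjoint (Xs 0) (Xs ℓ.succ))
    {M : Fin (d + 1) → Matrix (Fin w) (Fin w) (MvPolynomial ℕ K)} (hM : IsSparseROABP w t Xs M) :
    ((pdm (rename (extPart hh X e) (mprodVal hw M))).rank : ℝ) ≤
      w * t * 2 ^ ((h : ℝ) - (Xs 0).card / 2) := by
  classical
  set φ := extPart hh X e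
  have hinj : Set.InjOn φ X := extPart_injOn hh he
  have hvars (ℓ : Fin d) (i j) :
      Disjoint ((M ℓ.succ i j).vars : Set ℕ) (φ ⁻¹' ((Xs 0).image φ : Finset _)) := by
    refine Set.disjoint_left.2 fun x hx hx₀ => ?_
    obtain ⟨y, hy, hyx⟩ := Finset.mem_image.1 (Finset.mem_coe.1 hx₀)
    have hxs : x ∈ Xs ℓ.succ := (hM ℓ.succ i j).2.1 hx
    obtain rfl := hinj (hX 0 hy) (hX _ hxs) hyx
    exact Finset.disjoint_left.1 (hdis ℓ) hy hxs
  have hrestrict : (restrictedSupport ((Xs 0).image φ : Set _) (rename φ (mprodVal hw M))).card ≤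
      w * t := (card_restrictedSupport_rename_le _ _ _).trans
    (card_restrictedSupport_mprodVal_le hw _ M (fun j => (hM 0 _ j).2.2) hvars)
  calc ((pdm (rename φ (mprodVal hw M))).rank : ℝ)
      ≤ (restrictedSupport ((Xs 0).image φ : Set _) (rename φ (mprodVal hw M))).card *
          2 ^ ((h : ℝ) - ((Xs 0).image φ).card / 2) :=
        rank_pdm_le_two_rpow_sub_half_card _ _
    _ ≤ w * t * 2 ^ ((h : ℝ) - (Xs 0).card / 2) := by
        rw [Finset.card_image_of_injOn (hinj.mono (hX 0))]
        gcongr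
        exact_mod_cast hrestrict

end SparseROABP

section Asymptotics

lemma rpow_one_sub_le_two_mul {N d b : ℕ} {α : ℝ} (hN : 0 < N) (hα : 0 ≤ α)
    (hd : d = ⌈(N : ℝ) ^ α⌉₊) (hb : d * b = N) : (N : ℝ) ^ (1 - α) ≤ 2 * b := by
  have hN₀ : (0 : ℝ) < N := mod_cast hN
  have hN₁ : (1 : ℝ) ≤ (N : ℝ) ^ α := Real.one_le_rpow (mod_cast hN) hα
  have hd_le : (d : ℝ) ≤ 2 * (N : ℝ) ^ α := by
    rw [hd]
    linarith [Nat.ceil_lt_add_one (zero_le_one.trans hN₁)]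
  rw [Real.rpow_sub hN₀, Real.rpow_one, div_le_iff₀ (by positivity)]
  calc (N : ℝ) = d * b := mod_cast hb.symm
    _ ≤ 2 * (N : ℝ) ^ α * b := by gcongr
    _ = 2 * b * (N : ℝ) ^ α := by ring

lemma two_mul_rpow_quarter_le {x α : ℝ} (hx : 16 ≤ x) (hα : α ≤ 1 / 2) :
    2 * x ^ ((1 - α) / 4) ≤ x ^ (1 - α) := by
  have two_le : 2 ≤ x ^ (3 * (1 - α) / 4) := by
    calc (2 : ℝ) = 16 ^ (1 / 4 : ℝ) := by
          rw [show (16 : ℝ) = 2 ^ (4 : ℝ) by norm_num, ← Real.rpow_mul] <;> norm_num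
      _ ≤ x ^ (1 / 4 : ℝ) := by gcongr
      _ ≤ x ^ (3 * (1 - α) / 4) :=
          Real.rpow_le_rpow_of_exponent_le (by linarith) (by linarith)
  calc 2 * x ^ ((1 - α) / 4)
      ≤ x ^ (3 * (1 - α) / 4) * x ^ ((1 - α) / 4) := by gcongr
    _ = x ^ (1 - α) := by
        rw [← Real.rpow_add (by linarith)]
        ring_nf

lemma le_rpow_logb_two {x y : ℝ} (hx : 1 ≤ x) (hy : 2 ≤ y) : x ≤ x ^ Real.logb 2 y := by
  refine Real.self_le_rpow_of_one_le hx ?_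
  rwa [Real.le_logb_iff_rpow_le one_lt_two (by linarith), Real.rpow_one]

end Asymptotics

lemma unifProb_eq_one {Ω : Type*} [Fintype Ω] [Nonempty Ω] {p : Ω → Prop} (hp : ∀ ω, p ω) :
    unifProb p = 1 := by
  simp [unifProb, hp]

theorem sparse_roabp_rank_upper_bound_general {K : Type*} [CommSemiring K] [StrongRankCondition K]
    {N h d w t : ℕ} (hN : 0 < N) (hh : 0 < h) (hw : 0 < w) {α : ℝ} (hα : 0 ≤ α)
    (hd : d = ⌈(N : ℝ) ^ α⌉₊) {X : Finset ℕ} {e : {x // x ∈ X} → Fin h ⊕ Fin h}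
    (he : Function.Injective e) {Xs : Fin d → Finset ℕ} (hX : ∀ ℓ, Xs ℓ ⊆ X)
    (hdis : ∀ i j, i ≠ j → Disjoint (Xs i) (Xs j)) (hcard : ∀ ℓ, d * (Xs ℓ).card = N)
    {M : Fin d → Matrix (Fin w) (Fin w) (MvPolynomial ℕ K)} (hM : IsSparseROABP w t Xs M) :
    ((pdm (rename (extPart hh X e) (mprodVal hw M))).rank : ℝ) ≤
      w * t * 2 ^ ((h : ℝ) - (N : ℝ) ^ (1 - α) / 4) := by
  have hd₀ : d ≠ 0 := by
    rw [hd]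
    positivity
  obtain ⟨d, rfl⟩ := Nat.exists_eq_add_one_of_ne_zero hd₀
  have hblock : (N : ℝ) ^ (1 - α) ≤ 2 * (Xs 0).card :=
    rpow_one_sub_le_two_mul hN hα hd (hcard 0)
  calc ((pdm (rename (extPart hh X e) (mprodVal hw M))).rank : ℝ)
      ≤ w * t * 2 ^ ((h : ℝ) - (Xs 0).card / 2) :=
        rank_pdm_rename_mprodVal_le hh hw he hX (fun ℓ => hdis _ _ ℓ.succ_ne_zero.symm) hM
    _ ≤ w * t * 2 ^ ((h : ℝ) - (N : ℝ) ^ (1 - α) / 4) := by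
        gcongr _ * 2 ^ ?_
        · exact one_le_two
        · linarith

/-- With high probability under a random partition, the partial derivative matrix of a
polynomial computed by an α-sparse ROABP has low rank. -/
theorem sparse_roabp_rank_upper_bound :
    ∃ c c' : ℝ, 0 < c ∧ 0 < c' ∧ ∃ N₀ : ℕ, ∀ (K : Type) [Field K] (N h : ℕ),
      N₀ ≤ N → N = 2 * h → ∀ (hh : 0 < h),
      ∀ (α : ℝ), 1/10 < α → α ≤ 1/2 →
      ∀ (d : ℕ), d = ⌈(N : ℝ) ^ α⌉₊ → d ∣ N →
      ∀ (Xs : Fin d → Finset ℕ),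
        (∀ i j, i ≠ j → Disjoint (Xs i) (Xs j)) →
        Finset.univ.biUnion Xs = Finset.Icc 1 N →
        (∀ i, (Xs i).card = N / d) →
      ∀ (w t : ℕ) (hw : 2 ≤ w)
        (M : Fin d → Matrix (Fin w) (Fin w) (MvPolynomial ℕ K)),
        IsSparseROABP w t Xs M →
        1 - (2 : ℝ) ^ (-(c' * (N : ℝ) ^ ((1 : ℝ)/10) * Real.logb 2 N)) ≤
          unifProb (fun e : {x // x ∈ Finset.Icc 1 N} ≃ (Fin h ⊕ Fin h) =>
            (((pdm (rename (extPart hh (Finset.Icc 1 N) (fun x => e x))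
                  (mprodVal (show 0 < w by omega) M))).rank : ℝ) ≤
              (w : ℝ) ^ (c * Real.logb 2 N) * (t : ℝ) *
                2 ^ ((N : ℝ)/2 - (N : ℝ) ^ ((1 - α)/4) / 2))) := by
  refine ⟨1, 1, one_pos, one_pos, 16, fun K _ N h hN hNh hh α hα hα' d hd hdN Xs hdis hcov hcard
    w t hw M hM => ?_⟩
  have : Nonempty ({x // x ∈ Finset.Icc 1 N} ≃ (Fin h ⊕ Fin h)) :=
    Fintype.card_eq.1 (by simp [hNh, two_mul])
  rw [unifProb_eq_one fun e => ?_]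
  · exact sub_le_self _ (by positivity)
  refine (sparse_roabp_rank_upper_bound_general (by lia) hh (by lia) (by linarith) hd e.injective
    (fun ℓ => hcov ▸ Finset.subset_biUnion_of_mem Xs (Finset.mem_univ ℓ)) hdis
    (fun ℓ => by rw [hcard, Nat.mul_div_cancel' hdN]) hM).trans ?_
  have hN₁₆ : (16 : ℝ) ≤ N := mod_cast hN
  have hNh' : (N : ℝ) = 2 * h := mod_cast hNh
  gcongr ?_ * _ * 2 ^ ?_
  · rw [one_mul]
    exact le_rpow_logb_two (mod_cast Nat.one_le_of_lt hw) (by linarith)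
  · exact one_le_two
  · linarith [two_mul_rpow_quarter_le hN₁₆ hα']

end
end
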